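/- arXiv:1012.5591 — 2 statements merged into one kernel-verified Lean document; each statement's English description precedes it below -/
import Mathlib

section
/- For every ε ∈ (0, 4π) there exists a constant C_ε > 0 such that for all u ∈ Σ with H(u) ≤ 1 one has ∫_B e^{(4π−ε) u(x)²} dx ≤ C_ε. -/
/-!
The function `φ = √(1 - |x|²)` is a positive ground state of the Hardy operator:
`-Δφ - φ / (1 - |x|²)² = φ / (1 - |x|²)`. Hence, writing `u = φ v`,
`H(u) = ∫ φ² |∇v|² + ∫ v²`, a sum of two nonnegative terms. When `u` is radial and nonincreasing
and `H(u) ≤ 1`, the second term bounds `v` at radius `1/2`, while the first one controls the growth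
of `v` from there towards the origin by the Cauchy–Schwarz inequality with the weight
`s (1 - s²)`. This gives `u(x) ≤ 2 + √(log (1 / |x|) / (2π))`. Absorbing the constant `2` costs a
factor `1 + η` in front of the logarithm, so for `0 ≤ α < 4π` the function `exp (α u²)` is dominated
by a constant multiple of `|x| ^ (-p)` with `p < 2`, which is integrable and does not depend on `u`.
-/

open MeasureTheory Real Filter

noncomputable section

/-- `ℝ²` as a Euclidean space. -/
abbrev E2 : Type := EuclideanSpace ℝ (Fin 2)

/-- The open unit disc in `ℝ²`. -/
def B2 : Set E2 := Metric.ball 0 1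

/-- `u ∈ C_c^∞(B)`: a smooth function with compact support contained in the open unit disc. -/
def IsTest (u : E2 → ℝ) : Prop :=
  ContDiff ℝ (⊤ : ℕ∞) u ∧ HasCompactSupport u ∧ tsupport u ⊆ B2

/-- `u ∈ Σ`: a smooth compactly supported function on the unit disc which is radially
symmetric and nonincreasing in the radius (encoded as: `‖x‖ ≤ ‖y‖ → u y ≤ u x`, which is
equivalent to radial symmetry together with monotonicity in `r`). -/
def IsSigma (u : E2 → ℝ) : Prop :=
  IsTest u ∧ ∀ x y : E2, ‖x‖ ≤ ‖y‖ → u y ≤ u x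

/-- The localized Hardy functional `H_Ω(u) = ∫_Ω |∇u|² − ∫_Ω u²/(1−|x|²)²`. -/
def HOn (Ω : Set E2) (u : E2 → ℝ) : ℝ :=
  (∫ x in Ω, ‖gradient u x‖ ^ 2) - ∫ x in Ω, (u x) ^ 2 / (1 - ‖x‖ ^ 2) ^ 2

/-- The Hardy functional `H(u) = H_B(u)`. -/
def H (u : E2 → ℝ) : ℝ := HOn B2 u

/-- The point `(r, 0) ∈ ℝ²`, used to evaluate a radial function at radius `r`. -/
def pt (r : ℝ) : E2 := EuclideanSpace.single 0 r

theorem contDiff_div_of_tsupport {E : Type*} [NormedAddCommGroup E] [NormedSpace ℝ E]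
    {n : WithTop ℕ∞} {f g : E → ℝ} (hf : ContDiff ℝ n f)
    (hg : ∀ x ∈ tsupport f, ContDiffAt ℝ n g x) (hg0 : ∀ x ∈ tsupport f, g x ≠ 0) :
    ContDiff ℝ n fun x => f x / g x := by
  refine contDiff_iff_contDiffAt.2 fun x => ?_
  by_cases hx : x ∈ tsupport f
  · exact hf.contDiffAt.div (hg x hx) (hg0 x hx)
  · refine (contDiffAt_const (c := (0 : ℝ))).congr_of_eventuallyEq ?_
    filter_upwards [notMem_tsupport_iff_eventuallyEq.1 hx] with y hy
    simp [hy]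

theorem norm_gradient {F : Type*} [NormedAddCommGroup F] [InnerProductSpace ℝ F]
    [CompleteSpace F] (u : F → ℝ) (x : F) : ‖gradient u x‖ = ‖fderiv ℝ u x‖ := by
  simp [gradient]

theorem integrable_norm_gradient_sq {F : Type*} [NormedAddCommGroup F] [InnerProductSpace ℝ F]
    [CompleteSpace F] [MeasurableSpace F] [OpensMeasurableSpace F] {μ : Measure F}
    [IsFiniteMeasureOnCompacts μ] {u : F → ℝ} (hu : ContDiff ℝ 1 u) (hsupp : HasCompactSupport u) :
    Integrable (fun x => ‖gradient u x‖ ^ 2) μ := by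
  have hcont : Continuous fun x => ‖fderiv ℝ u x‖ ^ 2 :=
    (hu.continuous_fderiv one_ne_zero).norm.pow 2
  have hcpt : HasCompactSupport fun x => ‖fderiv ℝ u x‖ ^ 2 :=
    (hsupp.fderiv ℝ).comp_left (g := fun L : F →L[ℝ] ℝ => ‖L‖ ^ 2) (by simp)
  simpa only [norm_gradient] using hcont.integrable_of_hasCompactSupport hcpt

theorem sq_integral_le_integral_mul_integral_inv {f w : ℝ → ℝ} {a b : ℝ} (hab : a ≤ b)
    (hf : ContinuousOn f (Set.Icc a b)) (hw : ContinuousOn w (Set.Icc a b))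
    (hw0 : ∀ s ∈ Set.Icc a b, 0 < w s) :
    (∫ s in a..b, f s) ^ 2 ≤ (∫ s in a..b, w s * f s ^ 2) * ∫ s in a..b, (w s)⁻¹ := by
  have hwf : IntervalIntegrable (fun s => w s * f s ^ 2) volume a b :=
    (hw.mul (hf.pow 2)).intervalIntegrable_of_Icc hab
  have hfi : IntervalIntegrable f volume a b := hf.intervalIntegrable_of_Icc hab
  have hwi : IntervalIntegrable (fun s => (w s)⁻¹) volume a b :=
    (hw.inv₀ fun s hs => (hw0 s hs).ne').intervalIntegrable_of_Icc hab
  have expand : ∀ t : ℝ, ∫ s in a..b, w s * (t * f s + (w s)⁻¹) ^ 2 =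
      (∫ s in a..b, w s * f s ^ 2) * (t * t) + (2 * ∫ s in a..b, f s) * t +
        ∫ s in a..b, (w s)⁻¹ := by
    intro t
    rw [← intervalIntegral.integral_mul_const, ← intervalIntegral.integral_const_mul,
      ← intervalIntegral.integral_mul_const,
      ← intervalIntegral.integral_add (hwf.mul_const _) ((hfi.const_mul 2).mul_const t),
      ← intervalIntegral.integral_add ((hwf.mul_const _).add ((hfi.const_mul 2).mul_const t)) hwi]
    refine intervalIntegral.integral_congr fun s hs => ?_
    rw [Set.uIcc_of_le hab] at hs
    have := (hw0 s hs).ne'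
    field_simp
    ring
  have discrim_nonpos := discrim_le_zero fun t => (expand t).symm ▸
    intervalIntegral.integral_nonneg hab fun s hs => mul_nonneg (hw0 s hs).le (sq_nonneg _)
  rw [discrim] at discrim_nonpos
  linarith

theorem add_sq_le_of_pos {η : ℝ} (hη : 0 < η) (a b : ℝ) :
    (a + b) ^ 2 ≤ (1 + η⁻¹) * a ^ 2 + (1 + η) * b ^ 2 := by
  have gap : (1 + η⁻¹) * a ^ 2 + (1 + η) * b ^ 2 - (a + b) ^ 2 = (a - η * b) ^ 2 / η := by
    field_simp
    ring
  have : 0 ≤ (a - η * b) ^ 2 / η := by positivity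
  linarith

section Profile

/-- The Hardy functional, in polar coordinates, of the radial function on the disc whose value at
radius `r` is `U r`. -/
def radialHardy (U : ℝ → ℝ) : ℝ :=
  2 * π * ((∫ r in (0 : ℝ)..1, r * deriv U r ^ 2) -
    ∫ r in (0 : ℝ)..1, r * (U r ^ 2 / (1 - r ^ 2) ^ 2))

/-- The quotient `v = U / φ` of a radial profile by the ground state `φ r = √(1 - r²)`. Only
profiles supported in `(-1, 1)` are considered, so that the vanishing of `φ` for `1 ≤ |r|` is
harmless. -/
def groundStateQuotient (U : ℝ → ℝ) (r : ℝ) : ℝ := U r / √(1 - r ^ 2)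

variable {U : ℝ → ℝ}

theorem one_sub_sq_pos {r : ℝ} (hr : r ∈ Set.Ioo (-1) 1) : 0 < 1 - r ^ 2 := by
  nlinarith [hr.1, hr.2]

theorem groundStateQuotient_sq {r : ℝ} (hr : r ∈ Set.Ioo (-1) 1) :
    groundStateQuotient U r ^ 2 = U r ^ 2 / (1 - r ^ 2) := by
  rw [groundStateQuotient, div_pow, sq_sqrt (one_sub_sq_pos hr).le]

theorem le_groundStateQuotient {r : ℝ} (hr : r ∈ Set.Ioo (-1) 1) (hU : 0 ≤ U r) :
    U r ≤ groundStateQuotient U r := by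
  refine le_div_self hU (sqrt_pos.2 (one_sub_sq_pos hr)) (sqrt_le_one.2 ?_)
  linarith [sq_nonneg r]

theorem contDiff_groundStateQuotient {n : WithTop ℕ∞} (hU : ContDiff ℝ n U)
    (hsupp : tsupport U ⊆ Set.Ioo (-1) 1) : ContDiff ℝ n (groundStateQuotient U) :=
  contDiff_div_of_tsupport hU
    (fun _ hr => ContDiffAt.sqrt (by fun_prop) (one_sub_sq_pos (hsupp hr)).ne')
    fun _ hr => (sqrt_pos.2 (one_sub_sq_pos (hsupp hr))).ne'

theorem deriv_groundStateQuotient {r : ℝ} (hr : r ∈ Set.Ioo (-1) 1)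
    (hU : DifferentiableAt ℝ U r) :
    deriv (groundStateQuotient U) r =
      (deriv U r + r * U r / (1 - r ^ 2)) / √(1 - r ^ 2) := by
  have hpos := one_sub_sq_pos hr
  have hsqrt := sqrt_pos.2 hpos
  have hφ : HasDerivAt (fun r : ℝ => √(1 - r ^ 2)) (-(2 * r) / (2 * √(1 - r ^ 2))) r := by
    refine HasDerivAt.sqrt ?_ hpos.ne'
    simpa using (hasDerivAt_pow 2 r).const_sub 1
  refine (hU.hasDerivAt.div hφ hsqrt.ne').deriv.trans ?_
  field_simp
  rw [sq_sqrt hpos.le]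
  ring

-- The subtracted bracket is the derivative of `r² v²`, whose integral over `[0, 1]` vanishes.
theorem hardy_density_eq {r : ℝ} (hr : r ∈ Set.Ioo (-1) 1) (hU : DifferentiableAt ℝ U r) :
    r * deriv U r ^ 2 - r * (U r ^ 2 / (1 - r ^ 2) ^ 2) =
      r * (1 - r ^ 2) * deriv (groundStateQuotient U) r ^ 2 + r * groundStateQuotient U r ^ 2 -
        (2 * r * groundStateQuotient U r ^ 2 +
          r ^ 2 * (2 * groundStateQuotient U r * deriv (groundStateQuotient U) r)) := by
  have hpos := one_sub_sq_pos hr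
  have hcross : groundStateQuotient U r * deriv (groundStateQuotient U) r =
      U r * (deriv U r + r * U r / (1 - r ^ 2)) / (1 - r ^ 2) := by
    rw [deriv_groundStateQuotient hr hU, groundStateQuotient, div_mul_div_comm,
      mul_self_sqrt hpos.le]
  rw [mul_assoc 2 (groundStateQuotient U r), hcross, groundStateQuotient_sq hr,
    deriv_groundStateQuotient hr hU, div_pow, sq_sqrt hpos.le]
  field_simp
  ring

theorem integral_deriv_sq_mul_sq {v : ℝ → ℝ} (hv : ContDiff ℝ 1 v) (a b : ℝ) :
    ∫ r in a..b, (2 * r * v r ^ 2 + r ^ 2 * (2 * v r * deriv v r)) =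
      b ^ 2 * v b ^ 2 - a ^ 2 * v a ^ 2 := by
  have := hv.continuous_deriv le_rfl
  have := hv.continuous
  refine intervalIntegral.integral_eq_sub_of_hasDerivAt (f := fun r => r ^ 2 * v r ^ 2)
    (fun r _ => ?_) (Continuous.intervalIntegrable (by fun_prop) _ _)
  have hvr : HasDerivAt v (deriv v r) r := (hv.differentiable one_ne_zero r).hasDerivAt
  simpa using (hasDerivAt_pow 2 r).fun_mul (hvr.fun_pow 2)

theorem radialHardy_eq (hU : ContDiff ℝ 1 U) (hsupp : tsupport U ⊆ Set.Ioo (-1) 1) :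
    radialHardy U =
      2 * π * ((∫ r in (0 : ℝ)..1, r * (1 - r ^ 2) * deriv (groundStateQuotient U) r ^ 2) +
        ∫ r in (0 : ℝ)..1, r * groundStateQuotient U r ^ 2) := by
  have hv := contDiff_groundStateQuotient hU hsupp
  have := hv.continuous
  have := hv.continuous_deriv le_rfl
  have := hU.continuous_deriv le_rfl
  have hv1 : groundStateQuotient U 1 = 0 := by simp [groundStateQuotient]
  have hpot : Continuous fun r => U r ^ 2 / (1 - r ^ 2) ^ 2 := by
    simp only [← div_pow]
    exact (contDiff_div_of_tsupport hU (fun _ _ => by fun_prop)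
      fun _ hr => (one_sub_sq_pos (hsupp hr)).ne').continuous.pow 2
  set v := groundStateQuotient U
  have hboundary : ∫ r in (0 : ℝ)..1, (2 * r * v r ^ 2 + r ^ 2 * (2 * v r * deriv v r)) = 0 := by
    simp [integral_deriv_sq_mul_sq hv, hv1]
  have integrable {f : ℝ → ℝ} (hf : Continuous f) : IntervalIntegrable f volume 0 1 :=
    hf.intervalIntegrable 0 1
  calc radialHardy U
      = 2 * π * ∫ r in (0 : ℝ)..1, (r * deriv U r ^ 2 - r * (U r ^ 2 / (1 - r ^ 2) ^ 2)) := by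
        rw [radialHardy, intervalIntegral.integral_sub (integrable (by fun_prop))
          (integrable (by fun_prop))]
    _ = 2 * π * ∫ r in (0 : ℝ)..1, (r * (1 - r ^ 2) * deriv v r ^ 2 + r * v r ^ 2 -
          (2 * r * v r ^ 2 + r ^ 2 * (2 * v r * deriv v r))) := by
        congr 1
        exact intervalIntegral.integral_congr_Ioo_of_le zero_le_one fun r hr =>
          hardy_density_eq ⟨by linarith [hr.1], hr.2⟩ (hU.differentiable one_ne_zero r)
    _ = 2 * π * ((∫ r in (0 : ℝ)..1, r * (1 - r ^ 2) * deriv v r ^ 2) +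
          ∫ r in (0 : ℝ)..1, r * v r ^ 2) := by
        rw [intervalIntegral.integral_sub (integrable (by fun_prop)) (integrable (by fun_prop)),
          intervalIntegral.integral_add (integrable (by fun_prop)) (integrable (by fun_prop)),
          hboundary, sub_zero]

theorem integral_mul_deriv_groundStateQuotient_sq_le (hU : ContDiff ℝ 1 U)
    (hsupp : tsupport U ⊆ Set.Ioo (-1) 1) {a b : ℝ} (ha : 0 ≤ a) (hab : a ≤ b) (hb : b ≤ 1) :
    2 * π * ∫ r in a..b, r * (1 - r ^ 2) * deriv (groundStateQuotient U) r ^ 2 ≤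
      radialHardy U := by
  have hdv := (contDiff_groundStateQuotient hU hsupp).continuous_deriv le_rfl
  rw [radialHardy_eq hU hsupp]
  gcongr
  refine (intervalIntegral.integral_mono_interval ha hab hb ?_
    (Continuous.intervalIntegrable (by fun_prop) _ _)).trans (le_add_of_nonneg_right ?_)
  · filter_upwards [ae_restrict_mem measurableSet_Ioc] with r hr
    have : 0 ≤ 1 - r ^ 2 := by nlinarith [hr.1, hr.2]
    have := hr.1.le
    simp only [Pi.zero_apply]
    positivity
  · exact intervalIntegral.integral_nonneg zero_le_one fun r hr =>
      mul_nonneg hr.1 (sq_nonneg _)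

theorem integral_mul_groundStateQuotient_sq_le (hU : ContDiff ℝ 1 U)
    (hsupp : tsupport U ⊆ Set.Ioo (-1) 1) {a b : ℝ} (ha : 0 ≤ a) (hab : a ≤ b) (hb : b ≤ 1) :
    2 * π * ∫ r in a..b, r * groundStateQuotient U r ^ 2 ≤ radialHardy U := by
  have hvc := (contDiff_groundStateQuotient hU hsupp).continuous
  rw [radialHardy_eq hU hsupp]
  gcongr
  refine (intervalIntegral.integral_mono_interval ha hab hb ?_
    (Continuous.intervalIntegrable (by fun_prop) _ _)).trans (le_add_of_nonneg_left ?_)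
  · filter_upwards [ae_restrict_mem measurableSet_Ioc] with r hr
    exact mul_nonneg hr.1.le (sq_nonneg _)
  · refine intervalIntegral.integral_nonneg zero_le_one fun r hr => ?_
    have : 0 ≤ 1 - r ^ 2 := by nlinarith [hr.1, hr.2]
    have := hr.1
    positivity

theorem nonneg_of_antitoneOn_of_tsupport_subset (hsupp : tsupport U ⊆ Set.Ioo (-1) 1)
    (hanti : AntitoneOn U (Set.Ici 0)) {r : ℝ} (hr : 0 ≤ r) : 0 ≤ U r := by
  have hfar : U (max r 1) = 0 := image_eq_zero_of_notMem_tsupport fun h =>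
    (hsupp h).2.not_ge (le_max_right r 1)
  exact hfar ▸ hanti hr (hr.trans (le_max_left r 1)) (le_max_left r 1)

theorem groundStateQuotient_one_half_sq_le (hU : ContDiff ℝ 1 U)
    (hsupp : tsupport U ⊆ Set.Ioo (-1) 1) (hanti : AntitoneOn U (Set.Ici 0)) :
    3 * π * groundStateQuotient U (1 / 2) ^ 2 ≤ 16 * radialHardy U := by
  have hvc := (contDiff_groundStateQuotient hU hsupp).continuous
  have hU0 {r : ℝ} (hr : 0 ≤ r) := nonneg_of_antitoneOn_of_tsupport_subset hsupp hanti hr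
  have hmass : ∫ s in (0 : ℝ)..1 / 2, s * U (1 / 2) ^ 2 ≤
      ∫ s in (0 : ℝ)..1 / 2, s * groundStateQuotient U s ^ 2 := by
    refine intervalIntegral.integral_mono_on (by norm_num)
      (Continuous.intervalIntegrable (by fun_prop) _ _)
      (Continuous.intervalIntegrable (by fun_prop) _ _) fun s hs => ?_
    have hUs : U (1 / 2) ≤ groundStateQuotient U s :=
      (hanti hs.1 (Set.mem_Ici.2 (by norm_num)) hs.2).trans
        (le_groundStateQuotient ⟨by linarith [hs.1], by linarith [hs.2]⟩ (hU0 hs.1))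
    exact mul_le_mul_of_nonneg_left (pow_le_pow_left₀ (hU0 (by norm_num)) hUs 2) hs.1
  have henergy := (mul_le_mul_of_nonneg_left hmass two_pi_pos.le).trans
    (integral_mul_groundStateQuotient_sq_le hU hsupp le_rfl (by norm_num) (by norm_num))
  rw [intervalIntegral.integral_mul_const, integral_id] at henergy
  calc 3 * π * groundStateQuotient U (1 / 2) ^ 2
      = 16 * (2 * π * (((1 / 2) ^ 2 - 0 ^ 2) / 2 * U (1 / 2) ^ 2)) := by
        rw [groundStateQuotient_sq ⟨by norm_num, by norm_num⟩]
        ring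
    _ ≤ 16 * radialHardy U := by gcongr

theorem integral_inv_mul_one_sub_sq_le {r : ℝ} (hr0 : 0 < r) (hr : r ≤ 1 / 2) :
    ∫ s in r..1 / 2, (s * (1 - s ^ 2))⁻¹ ≤ -log r := by
  have hsub {s : ℝ} (hs : s ∈ Set.Icc r (1 / 2)) : 0 < s ∧ 0 < 1 - s ^ 2 := by
    have := hs.2
    have : 0 < s := hr0.trans_le hs.1
    exact ⟨this, by nlinarith⟩
  have hprim : ∀ s ∈ Set.uIcc r (1 / 2), HasDerivAt (fun s => log s - log (1 - s ^ 2) / 2)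
      ((s * (1 - s ^ 2))⁻¹) s := by
    intro s hs
    rw [Set.uIcc_of_le hr] at hs
    obtain ⟨hs0, hs1⟩ := hsub hs
    have hden : HasDerivAt (fun s : ℝ => 1 - s ^ 2) (-(2 * s)) s := by
      simpa using (hasDerivAt_pow 2 s).const_sub 1
    refine ((hasDerivAt_log hs0.ne').sub ((hden.log hs1.ne').div_const 2)).congr_deriv ?_
    field_simp
    ring
  have hint : IntervalIntegrable (fun s : ℝ => (s * (1 - s ^ 2))⁻¹) volume r (1 / 2) := by
    refine ContinuousOn.intervalIntegrable_of_Icc hr (ContinuousOn.inv₀ (by fun_prop) ?_)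
    exact fun s hs => (mul_pos (hsub hs).1 (hsub hs).2).ne'
  have hbottom : log (1 - r ^ 2) ≤ 0 :=
    log_nonpos (hsub ⟨le_rfl, hr⟩).2.le (by linarith [sq_nonneg r])
  have htop : log (1 / 2) - log (1 - (1 / 2) ^ 2) / 2 ≤ 0 := by
    have : log ((1 / 2) ^ 2) ≤ log (1 - (1 / 2) ^ 2) := log_le_log (by norm_num) (by norm_num)
    rw [log_pow] at this
    push_cast at this
    linarith
  rw [intervalIntegral.integral_eq_sub_of_hasDerivAt hprim hint]
  linarith

theorem groundStateQuotient_sub_sq_le (hU : ContDiff ℝ 1 U)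
    (hsupp : tsupport U ⊆ Set.Ioo (-1) 1) {r : ℝ} (hr0 : 0 < r) (hr : r ≤ 1 / 2) :
    2 * π * (groundStateQuotient U r - groundStateQuotient U (1 / 2)) ^ 2 ≤
      radialHardy U * -log r := by
  have hv := contDiff_groundStateQuotient hU hsupp
  have hdv : Continuous (deriv (groundStateQuotient U)) := hv.continuous_deriv le_rfl
  set v := groundStateQuotient U
  have hweight : ∀ s ∈ Set.Icc r (1 / 2), 0 < s * (1 - s ^ 2) := fun s hs => by
    have := hr0.trans_le hs.1
    exact mul_pos this (one_sub_sq_pos ⟨by linarith, by linarith [hs.2]⟩)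
  have henergy := integral_mul_deriv_groundStateQuotient_sq_le hU hsupp hr0.le hr (by norm_num)
  have hFTC : ∫ s in r..1 / 2, deriv v s = v (1 / 2) - v r :=
    intervalIntegral.integral_deriv_eq_sub (fun s _ => hv.differentiable one_ne_zero s)
      (hdv.intervalIntegrable _ _)
  calc 2 * π * (v r - v (1 / 2)) ^ 2
      = 2 * π * (∫ s in r..1 / 2, deriv v s) ^ 2 := by rw [hFTC, sub_sq_comm]
    _ ≤ 2 * π * ((∫ s in r..1 / 2, s * (1 - s ^ 2) * deriv v s ^ 2) *
          ∫ s in r..1 / 2, (s * (1 - s ^ 2))⁻¹) := by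
        gcongr
        exact sq_integral_le_integral_mul_integral_inv hr hdv.continuousOn (by fun_prop) hweight
    _ = (2 * π * ∫ s in r..1 / 2, s * (1 - s ^ 2) * deriv v s ^ 2) *
          ∫ s in r..1 / 2, (s * (1 - s ^ 2))⁻¹ := by ring
    _ ≤ radialHardy U * -log r := by
        refine mul_le_mul henergy (integral_inv_mul_one_sub_sq_le hr0 hr)
          (intervalIntegral.integral_nonneg hr fun s hs => (inv_pos.2 (hweight s hs)).le) ?_
        refine le_trans (mul_nonneg two_pi_pos.le ?_) henergy
        exact intervalIntegral.integral_nonneg hr fun s hs =>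
          mul_nonneg (hweight s hs).le (sq_nonneg _)

theorem le_two_add_sqrt_of_radialHardy_le_one (hU : ContDiff ℝ 1 U)
    (hsupp : tsupport U ⊆ Set.Ioo (-1) 1) (hanti : AntitoneOn U (Set.Ici 0))
    (hE : radialHardy U ≤ 1) {r : ℝ} (hr : r ∈ Set.Ioo 0 1) :
    U r ≤ 2 + √(-log r / (2 * π)) := by
  have hlog : 0 ≤ -log r := neg_nonneg.2 (log_nonpos hr.1.le hr.2.le)
  have hU0 {s : ℝ} (hs : 0 ≤ s) := nonneg_of_antitoneOn_of_tsupport_subset hsupp hanti hs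
  have hhalf : groundStateQuotient U (1 / 2) ≤ 2 := by
    have := groundStateQuotient_one_half_sq_le hU hsupp hanti
    nlinarith [pi_gt_three]
  rcases le_total r (1 / 2) with hr2 | hr2
  · have hgrowth : groundStateQuotient U r - groundStateQuotient U (1 / 2) ≤
        √(-log r / (2 * π)) := by
      refine le_sqrt_of_sq_le ((le_div_iff₀' two_pi_pos).2 ?_)
      exact (groundStateQuotient_sub_sq_le hU hsupp hr.1 hr2).trans
        (mul_le_of_le_one_left hlog hE)
    linarith [le_groundStateQuotient ⟨by linarith [hr.1], hr.2⟩ (hU0 hr.1.le)]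
  · calc U r ≤ U (1 / 2) := hanti (Set.mem_Ici.2 (by norm_num)) hr.1.le hr2
      _ ≤ groundStateQuotient U (1 / 2) :=
        le_groundStateQuotient ⟨by norm_num, by norm_num⟩ (hU0 (by norm_num))
      _ ≤ 2 + √(-log r / (2 * π)) := hhalf.trans (le_add_of_nonneg_right (sqrt_nonneg _))

end Profile

section Radial

/-- The profile `r ↦ u (r, 0)` of a function on the plane. -/
def profile (u : E2 → ℝ) (r : ℝ) : ℝ := u (pt r)

variable {u : E2 → ℝ}

theorem norm_pt (r : ℝ) : ‖pt r‖ = |r| := by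
  simp [pt]

theorem contDiff_pt {n : WithTop ℕ∞} : ContDiff ℝ n pt := by
  have : pt = fun r : ℝ => r • EuclideanSpace.single (0 : Fin 2) (1 : ℝ) := by
    ext r i
    simp [pt]
  rw [this]
  fun_prop

theorem profile_norm (hrad : ∀ x y : E2, ‖x‖ = ‖y‖ → u x = u y) (x : E2) :
    profile u ‖x‖ = u x :=
  hrad _ _ (by simp [norm_pt])

theorem tsupport_profile_subset (hsupp : tsupport u ⊆ B2) :
    tsupport (profile u) ⊆ Set.Ioo (-1) 1 := by
  intro r hr
  have hpt := hsupp (tsupport_comp_subset_preimage u (contDiff_pt (n := 0)).continuous hr)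
  rwa [B2, mem_ball_zero_iff, norm_pt, abs_lt] at hpt

theorem antitoneOn_profile (hanti : ∀ x y : E2, ‖x‖ ≤ ‖y‖ → u y ≤ u x) :
    AntitoneOn (profile u) (Set.Ici 0) := fun r hr s hs hrs => hanti _ _ <| by
  rwa [norm_pt, norm_pt, abs_of_nonneg hr, abs_of_nonneg hs]

theorem abs_deriv_profile_le_norm_gradient (hrad : ∀ x y : E2, ‖x‖ = ‖y‖ → u x = u y) {x : E2}
    (hu : DifferentiableAt ℝ u x) : |deriv (profile u) ‖x‖| ≤ ‖gradient u x‖ := by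
  obtain ⟨e, he, hx⟩ : ∃ e : E2, ‖e‖ = 1 ∧ ‖x‖ • e = x := by
    rcases eq_or_ne x 0 with rfl | h
    · exact ⟨pt 1, by simp [norm_pt], by simp⟩
    · exact ⟨‖x‖⁻¹ • x, norm_smul_inv_norm h, smul_inv_smul₀ (norm_ne_zero_iff.2 h) x⟩
  have hray : profile u = u ∘ fun t : ℝ => t • e :=
    funext fun t => hrad _ _ (by simp [norm_pt, norm_smul, he])
  have hderiv : HasDerivAt (profile u) (fderiv ℝ u x e) ‖x‖ := by
    rw [hray]
    refine HasFDerivAt.comp_hasDerivAt _ (hx.symm ▸ hu.hasFDerivAt) ?_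
    simpa using (hasDerivAt_id ‖x‖).smul_const e
  rw [hderiv.deriv, norm_gradient]
  simpa [he] using (fderiv ℝ u x).le_opNorm e

theorem measurableSet_B2 : MeasurableSet B2 :=
  Metric.isOpen_ball.measurableSet

theorem setIntegral_B2_fun_norm (f : ℝ → ℝ) :
    ∫ x in B2, f ‖x‖ = 2 * π * ∫ r in (0 : ℝ)..1, r * f r := by
  have hball : (volume : Measure E2).real (Metric.ball 0 1) = π := by
    simp [Measure.real, pi_nonneg]
  have hind : B2.indicator (fun x => f ‖x‖) = fun x => (Set.Iio 1).indicator f ‖x‖ := by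
    ext x
    simp [B2, Set.indicator]
  rw [← integral_indicator measurableSet_B2, hind, integral_fun_norm_addHaar, hball,
    intervalIntegral.integral_of_le zero_le_one, integral_Ioc_eq_integral_Ioo]
  have : ∀ r : ℝ, r * (Set.Iio 1).indicator f r = (Set.Iio 1).indicator (fun r => r * f r) r := by
    intro r
    simp [Set.indicator]
  simp [this, setIntegral_indicator measurableSet_Iio, Set.Ioi_inter_Iio, mul_assoc]

theorem radialHardy_profile_le_H (hu : ContDiff ℝ 1 u) (hsupp : HasCompactSupport u)
    (hrad : ∀ x y : E2, ‖x‖ = ‖y‖ → u x = u y) : radialHardy (profile u) ≤ H u := by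
  have hpot : ∫ x in B2, u x ^ 2 / (1 - ‖x‖ ^ 2) ^ 2 =
      2 * π * ∫ r in (0 : ℝ)..1, r * (profile u r ^ 2 / (1 - r ^ 2) ^ 2) := by
    simp only [← setIntegral_B2_fun_norm fun r => profile u r ^ 2 / (1 - r ^ 2) ^ 2,
      profile_norm hrad]
  have hgrad : ∫ x in B2, deriv (profile u) ‖x‖ ^ 2 ≤ ∫ x in B2, ‖gradient u x‖ ^ 2 := by
    refine integral_mono_of_nonneg (.of_forall fun x => sq_nonneg _)
      (integrable_norm_gradient_sq hu hsupp).integrableOn (.of_forall fun x => ?_)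
    exact sq_le_sq.2 <| (abs_deriv_profile_le_norm_gradient hrad
      (hu.differentiable one_ne_zero x)).trans (le_abs_self _)
  rw [setIntegral_B2_fun_norm fun r => deriv (profile u) r ^ 2] at hgrad
  rw [radialHardy, H, HOn, mul_sub, hpot]
  gcongr

theorem nonneg_of_antitone_norm (hsupp : tsupport u ⊆ B2)
    (hanti : ∀ x y : E2, ‖x‖ ≤ ‖y‖ → u y ≤ u x) (x : E2) : 0 ≤ u x :=
  profile_norm (fun x y h => le_antisymm (hanti y x h.ge) (hanti x y h.le)) x ▸
    nonneg_of_antitoneOn_of_tsupport_subset (tsupport_profile_subset hsupp)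
      (antitoneOn_profile hanti) (norm_nonneg x)

theorem le_two_add_sqrt_of_H_le_one (hu : ContDiff ℝ 1 u) (hsupp : tsupport u ⊆ B2)
    (hanti : ∀ x y : E2, ‖x‖ ≤ ‖y‖ → u y ≤ u x) (hH : H u ≤ 1) {x : E2} (hx0 : x ≠ 0)
    (hx : x ∈ B2) : u x ≤ 2 + √(-log ‖x‖ / (2 * π)) := by
  have hrad : ∀ x y : E2, ‖x‖ = ‖y‖ → u x = u y := fun x y h =>
    le_antisymm (hanti y x h.ge) (hanti x y h.le)
  have hcpt : HasCompactSupport u :=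
    Metric.isCompact_of_isClosed_isBounded (isClosed_tsupport u)
      (Metric.isBounded_ball.subset hsupp)
  rw [← profile_norm hrad x]
  exact le_two_add_sqrt_of_radialHardy_le_one (hu.comp contDiff_pt) (tsupport_profile_subset hsupp)
    (antitoneOn_profile hanti) ((radialHardy_profile_le_H hu hcpt hrad).trans hH)
    ⟨norm_pos_iff.2 hx0, mem_ball_zero_iff.1 hx⟩

end Radial

theorem exp_mul_sq_le_exp_mul_rpow {α η t ρ : ℝ} (hα : 0 ≤ α) (hη : 0 < η) (ht : 0 ≤ t)
    (hρ0 : 0 < ρ) (hρ1 : ρ ≤ 1) (htρ : t ≤ 2 + √(-log ρ / (2 * π))) :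
    exp (α * t ^ 2) ≤ exp (4 * α * (1 + η⁻¹)) * ρ ^ (-(α * (1 + η) / (2 * π))) := by
  have hlog : 0 ≤ -log ρ / (2 * π) :=
    div_nonneg (neg_nonneg.2 (log_nonpos hρ0.le hρ1)) two_pi_pos.le
  have hsq : t ^ 2 ≤ (1 + η⁻¹) * 2 ^ 2 + (1 + η) * (-log ρ / (2 * π)) := by
    have := (pow_le_pow_left₀ ht htρ 2).trans (add_sq_le_of_pos hη _ _)
    rwa [sq_sqrt hlog] at this
  rw [rpow_def_of_pos hρ0, ← exp_add, exp_le_exp]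
  calc α * t ^ 2 ≤ α * ((1 + η⁻¹) * 2 ^ 2 + (1 + η) * (-log ρ / (2 * π))) := by gcongr
    _ = 4 * α * (1 + η⁻¹) + log ρ * -(α * (1 + η) / (2 * π)) := by ring

theorem integrableOn_B2_norm_rpow {p : ℝ} (hp : p < 2) :
    IntegrableOn (fun x : E2 => ‖x‖ ^ (-p)) B2 := by
  rw [B2, integrableOn_fun_norm_addHaar volume (f := fun r : ℝ => r ^ (-p))]
  have hrpow : IntegrableOn (fun r : ℝ => r ^ (1 - p)) (Set.Ioo 0 1) :=
    (intervalIntegral.integrableOn_Ioo_rpow_iff one_pos).2 (by linarith)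
  refine hrpow.congr_fun (fun r hr => ?_) measurableSet_Ioo
  simp only [sub_eq_add_neg, rpow_add hr.1, finrank_euclideanSpace, Fintype.card_fin, rpow_one,
    smul_eq_mul, Nat.add_one_sub_one, pow_one]

theorem setIntegral_exp_mul_sq_le {u : E2 → ℝ} (hu : ContDiff ℝ 1 u) (hsupp : tsupport u ⊆ B2)
    (hanti : ∀ x y : E2, ‖x‖ ≤ ‖y‖ → u y ≤ u x) (hH : H u ≤ 1) {α η : ℝ} (hα : 0 ≤ α)
    (hη : 0 < η) (hαη : α * (1 + η) < 4 * π) :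
    ∫ x in B2, exp (α * u x ^ 2) ≤
      exp (4 * α * (1 + η⁻¹)) * ∫ x in B2, ‖x‖ ^ (-(α * (1 + η) / (2 * π))) := by
  have hp : α * (1 + η) / (2 * π) < 2 := by
    rw [div_lt_iff₀ two_pi_pos]
    linarith
  rw [← integral_const_mul]
  refine integral_mono_of_nonneg (.of_forall fun x => (exp_pos _).le)
    ((integrableOn_B2_norm_rpow hp).const_mul _) ?_
  filter_upwards [ae_restrict_of_ae (Measure.ae_ne volume 0),
    ae_restrict_mem measurableSet_B2] with x hx0 hx
  exact exp_mul_sq_le_exp_mul_rpow hα hη (nonneg_of_antitone_norm hsupp hanti x)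
    (norm_pos_iff.2 hx0) (mem_ball_zero_iff.1 hx).le
    (le_two_add_sqrt_of_H_le_one hu hsupp hanti hH hx0 hx)

theorem subcritical_hardy_moser_trudinger_general {α : ℝ} (hα0 : 0 ≤ α) (hα : α < 4 * π) :
    ∃ C : ℝ, 0 < C ∧ ∀ u : E2 → ℝ, ContDiff ℝ 1 u → tsupport u ⊆ B2 →
      (∀ x y : E2, ‖x‖ ≤ ‖y‖ → u y ≤ u x) → H u ≤ 1 →
        (∫ x in B2, Real.exp (α * (u x) ^ 2)) ≤ C := by
  obtain ⟨η, hη, hαη⟩ : ∃ η : ℝ, 0 < η ∧ α * (1 + η) < 4 * π := by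
    refine ⟨1 - α / (4 * π), sub_pos.2 ((div_lt_one (by positivity)).2 hα), ?_⟩
    have gap : 4 * π - α * (1 + (1 - α / (4 * π))) = (4 * π - α) ^ 2 / (4 * π) := by
      field_simp
      ring
    have : 0 < (4 * π - α) ^ 2 / (4 * π) := div_pos (pow_pos (sub_pos.2 hα) 2) (by positivity)
    linarith
  exact ⟨max 1 _, by positivity, fun u hu hsupp hanti hH => le_max_of_le_right
    (setIntegral_exp_mul_sq_le hu hsupp hanti hH hα0 hη hαη)⟩

/-- Subcritical Hardy–Moser–Trudinger inequality (Theorem 3, inequality (3.1)):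
for every `ε ∈ (0, 4π)` there is `C_ε > 0` such that `∫_B e^{(4π−ε)u²} ≤ C_ε`
for all `u ∈ Σ` with `H(u) ≤ 1`. -/
theorem subcritical_hardy_moser_trudinger :
    ∀ ε : ℝ, 0 < ε → ε < 4 * π →
      ∃ Cε : ℝ, 0 < Cε ∧ ∀ u : E2 → ℝ, IsSigma u → H u ≤ 1 →
        (∫ x in B2, Real.exp ((4 * π - ε) * (u x) ^ 2)) ≤ Cε := by
  intro ε hε hε4
  obtain ⟨C, hC, hbound⟩ := subcritical_hardy_moser_trudinger_general
    (sub_nonneg.2 hε4.le) (sub_lt_self (4 * π) hε)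
  exact ⟨C, hC, fun u hu => hbound u (hu.1.1.of_le (by simp)) hu.1.2.2 hu.2⟩
end
end

section
/- For every u ∈ Σ and every r ∈ (0, 1), one has H_{B \ B_r}(u) ≥ 0; equivalently, H_{B_r}(u) ≤ H(u), where H(u) = H_B(u). -/
/-!
The function `φ(x) = √(1 - |x|²)` decreases along every ray from the origin and satisfies
`-φ'' = φ / (1 - s²)²` in the radial variable `s = |x|`. Being decreasing, it is a supersolution
`-(sⁿ φ')' ≥ sⁿ φ / (1 - s²)²` for every radial weight `sⁿ`. Completing the square in
`(v' - v φ'/φ)² ≥ 0` bounds `sⁿ (v'² - v² / (1 - s²)²)` below by the derivative of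
`sⁿ v² φ'/φ = -sⁿ⁺¹ v² / (1 - s²)`, whose integral over `(a, ∞)` is
`aⁿ⁺¹ v(a)² / (1 - a²) ≥ 0`. Applying this with `v(s) = u(s y)` on each ray `y`, where
`|v'(s)| ≤ ‖Du(s y)‖`, and integrating over the unit sphere gives the inequality on the exterior
of any centered ball, without radial symmetry of `u` and in every positive dimension.
-/

open MeasureTheory Real Filter

noncomputable section

open Set Metric Module

section Density

lemma hasCompactSupport_of_tsupport_subset_ball {X M : Type*} [PseudoMetricSpace X]
    [ProperSpace X] [Zero M] {f : X → M} {c : X} {R : ℝ} (hf : tsupport f ⊆ ball c R) :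
    HasCompactSupport f :=
  .of_support_subset_isCompact (isCompact_closedBall c R)
    ((subset_tsupport f).trans (hf.trans ball_subset_closedBall))

variable {E : Type*} [NormedAddCommGroup E] {u : E → ℝ}

lemma one_sub_norm_sq_pos {x : E} (hx : x ∈ ball 0 1) : 0 < 1 - ‖x‖ ^ 2 := by
  have : ‖x‖ < 1 := mem_ball_zero_iff.1 hx
  nlinarith [norm_nonneg x]

lemma support_sq_div_one_sub_norm_sq_sq_subset :
    Function.support (fun x => u x ^ 2 / (1 - ‖x‖ ^ 2) ^ 2) ⊆ Function.support u :=
  fun x hx hx0 => hx (by simp [hx0])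

lemma continuous_sq_div_one_sub_norm_sq_sq (hu : Continuous u) (hs : tsupport u ⊆ ball 0 1) :
    Continuous fun x => u x ^ 2 / (1 - ‖x‖ ^ 2) ^ 2 := by
  refine continuous_of_tsupport fun x hx => ContinuousAt.div (by fun_prop) (by fun_prop) ?_
  have hxu : x ∈ tsupport u := closure_mono support_sq_div_one_sub_norm_sq_sq_subset hx
  exact (pow_pos (one_sub_norm_sq_pos (hs hxu)) 2).ne'

lemma integrable_sq_div_one_sub_norm_sq_sq [ProperSpace E] [MeasurableSpace E]
    [OpensMeasurableSpace E] (μ : Measure E) [IsFiniteMeasureOnCompacts μ] (hu : Continuous u)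
    (hs : tsupport u ⊆ ball 0 1) : Integrable (fun x => u x ^ 2 / (1 - ‖x‖ ^ 2) ^ 2) μ :=
  (continuous_sq_div_one_sub_norm_sq_sq hu hs).integrable_of_hasCompactSupport
    ((hasCompactSupport_of_tsupport_subset_ball hs).mono
      support_sq_div_one_sub_norm_sq_sq_subset)

variable [NormedSpace ℝ E]

/-- The integrand of the Hardy functional, on a real normed space. The gradient is replaced by the
Fréchet derivative with its dual norm, so that no inner product is needed. -/
def hardyDensity (u : E → ℝ) (x : E) : ℝ :=
  ‖fderiv ℝ u x‖ ^ 2 - u x ^ 2 / (1 - ‖x‖ ^ 2) ^ 2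

lemma continuous_hardyDensity (hu : ContDiff ℝ 1 u) (hs : tsupport u ⊆ ball 0 1) :
    Continuous (hardyDensity u) :=
  ((hu.continuous_fderiv one_ne_zero).norm.pow 2).sub
    (continuous_sq_div_one_sub_norm_sq_sq hu.continuous hs)

lemma support_hardyDensity_subset : Function.support (hardyDensity u) ⊆ tsupport u := by
  intro x hx
  by_contra hxu
  exact hx (by simp [hardyDensity, fderiv_of_notMem_tsupport ℝ hxu,
    image_eq_zero_of_notMem_tsupport hxu])

lemma tsupport_hardyDensity_subset : tsupport (hardyDensity u) ⊆ tsupport u :=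
  closure_minimal support_hardyDensity_subset (isClosed_tsupport u)

lemma hardyDensity_comp_linearIsometry_le {F : Type*} [NormedAddCommGroup F] [NormedSpace ℝ F]
    (L : F →ₗᵢ[ℝ] E) {x : F} (hu : DifferentiableAt ℝ u (L x)) :
    hardyDensity (u ∘ L) x ≤ hardyDensity u (L x) := by
  have hchain : fderiv ℝ (u ∘ L) x = (fderiv ℝ u (L x)).comp L.toContinuousLinearMap :=
    (hu.hasFDerivAt.comp x L.toContinuousLinearMap.hasFDerivAt).fderiv
  have hnorm : ‖fderiv ℝ (u ∘ L) x‖ ≤ ‖fderiv ℝ u (L x)‖ := by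
    rw [hchain]
    refine ContinuousLinearMap.opNorm_le_bound _ (norm_nonneg _) fun y => ?_
    simpa using (fderiv ℝ u (L x)).le_opNorm (L y)
  simp only [hardyDensity, Function.comp_apply, L.norm_map]
  gcongr

variable [MeasurableSpace E] [OpensMeasurableSpace E] (μ : Measure E)

lemma setIntegral_ball_diff_ball_hardyDensity (hs : tsupport u ⊆ ball 0 1) (r : ℝ) :
    ∫ x in ball 0 1 \ ball 0 r, hardyDensity u x ∂μ =
      ∫ x in (ball 0 r)ᶜ, hardyDensity u x ∂μ := by
  refine (setIntegral_eq_of_subset_of_forall_sdiff_eq_zero measurableSet_ball.compl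
    (fun x hx => hx.2) fun x hx => ?_).symm
  exact Function.notMem_support.1 fun hxs =>
    hx.2 ⟨hs (support_hardyDensity_subset hxs), hx.1⟩

variable [IsFiniteMeasureOnCompacts μ]

lemma integrable_norm_fderiv_sq (hu : ContDiff ℝ 1 u) (hc : HasCompactSupport u) :
    Integrable (fun x => ‖fderiv ℝ u x‖ ^ 2) μ :=
  ((hu.continuous_fderiv one_ne_zero).norm.pow 2).integrable_of_hasCompactSupport
    ((hc.fderiv ℝ).mono fun x hx hx0 => hx (by simp [hx0]))

variable [ProperSpace E]

lemma integrable_hardyDensity (hu : ContDiff ℝ 1 u) (hs : tsupport u ⊆ ball 0 1) :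
    Integrable (hardyDensity u) μ :=
  (integrable_norm_fderiv_sq μ hu (hasCompactSupport_of_tsupport_subset_ball hs)).sub
    (integrable_sq_div_one_sub_norm_sq_sq μ hu.continuous hs)

lemma setIntegral_hardyDensity (hu : ContDiff ℝ 1 u) (hs : tsupport u ⊆ ball 0 1) (Ω : Set E) :
    ∫ x in Ω, hardyDensity u x ∂μ =
      (∫ x in Ω, ‖fderiv ℝ u x‖ ^ 2 ∂μ) - ∫ x in Ω, u x ^ 2 / (1 - ‖x‖ ^ 2) ^ 2 ∂μ :=
  integral_sub
    (integrable_norm_fderiv_sq μ hu (hasCompactSupport_of_tsupport_subset_ball hs)).integrableOn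
    (integrable_sq_div_one_sub_norm_sq_sq μ hu.continuous hs).integrableOn

end Density

section Ray

variable {v : ℝ → ℝ}

/-- The quantity `sⁿ v² φ'/φ` for the supersolution `φ(s) = √(1 - s²)`; its derivative bounds the
weighted density `sⁿ (v'² - v² / (1 - s²)²)` from below. -/
def hardyFlux (n : ℕ) (v : ℝ → ℝ) (s : ℝ) : ℝ :=
  -(s ^ (n + 1) * (v s ^ 2 / (1 - s ^ 2)))

lemma support_hardyFlux_subset (n : ℕ) (v : ℝ → ℝ) :
    Function.support (hardyFlux n v) ⊆ Function.support v :=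
  fun s hs hv => hs (by simp [hardyFlux, hv])

lemma one_sub_sq_pos_of_mem_ball {s : ℝ} (hs : s ∈ ball 0 1) : 0 < 1 - s ^ 2 := by
  simpa using one_sub_norm_sq_pos hs

lemma contDiff_hardyFlux {k : WithTop ℕ∞} (n : ℕ) (hv : ContDiff ℝ k v)
    (hs : tsupport v ⊆ ball 0 1) : ContDiff ℝ k (hardyFlux n v) := by
  refine (contMDiff_of_tsupport fun s hsupp => ?_).contDiff
  have hne : 1 - s ^ 2 ≠ 0 :=
    (one_sub_sq_pos_of_mem_ball (hs (closure_mono (support_hardyFlux_subset n v) hsupp))).ne'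
  exact ((contDiffAt_id.pow (n + 1)).mul
    ((hv.contDiffAt.pow 2).div (contDiffAt_const.sub (contDiffAt_id.pow 2)) hne)).neg.contMDiffAt

lemma hasDerivAt_hardyFlux (n : ℕ) {s v' : ℝ} (hv : HasDerivAt v v' s) (hs : 1 - s ^ 2 ≠ 0) :
    HasDerivAt (hardyFlux n v)
      (s ^ n * (v' ^ 2 - v s ^ 2 / (1 - s ^ 2) ^ 2 -
        (v' + s * v s / (1 - s ^ 2)) ^ 2 - n * v s ^ 2 / (1 - s ^ 2))) s := by
  refine (((hasDerivAt_id s).pow (n + 1)).mul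
    ((hv.pow 2).div (((hasDerivAt_id s).pow 2).const_sub 1) hs)).neg.congr_deriv ?_
  simp only [Nat.cast_add, Nat.cast_one, id_eq, add_tsub_cancel_right, mul_one, Pi.pow_apply,
    Pi.div_apply, Nat.cast_ofNat, Nat.add_one_sub_one, pow_one, mul_neg, sub_neg_eq_add,
    neg_add_rev]
  field_simp
  ring

lemma deriv_hardyFlux_le (n : ℕ) {s : ℝ} (hv : DifferentiableAt ℝ v s)
    (hs : tsupport v ⊆ ball 0 1) (hs₀ : 0 ≤ s) :
    deriv (hardyFlux n v) s ≤ s ^ n * hardyDensity v s := by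
  by_cases hsv : s ∈ tsupport v
  · have hpos : 0 < 1 - s ^ 2 := one_sub_sq_pos_of_mem_ball (hs hsv)
    have hrest : 0 ≤ n * v s ^ 2 / (1 - s ^ 2) := by positivity
    rw [(hasDerivAt_hardyFlux n hv.hasDerivAt hpos.ne').deriv, hardyDensity,
      ← norm_deriv_eq_norm_fderiv, norm_eq_abs, norm_eq_abs, sq_abs, sq_abs]
    exact mul_le_mul_of_nonneg_left
      (by linarith [sq_nonneg (deriv v s + s * v s / (1 - s ^ 2))]) (pow_nonneg hs₀ n)
  · have hflux : s ∉ tsupport (hardyFlux n v) :=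
      fun h => hsv (closure_mono (support_hardyFlux_subset n v) h)
    rw [Function.notMem_support.1 fun h => hflux (support_deriv_subset h),
      Function.notMem_support.1 fun h => hsv (support_hardyDensity_subset h), mul_zero]

lemma integrable_pow_mul_of_tsupport_subset_ball (n : ℕ) {g : ℝ → ℝ} (hg : Continuous g) {c R : ℝ}
    (hs : tsupport g ⊆ ball c R) : Integrable fun s => s ^ n * g s :=
  ((continuous_pow n).mul hg).integrable_of_hasCompactSupport
    (hasCompactSupport_of_tsupport_subset_ball hs).mul_left

lemma integral_Ioi_pow_mul_hardyDensity_nonneg (n : ℕ) (hv : ContDiff ℝ 1 v)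
    (hs : tsupport v ⊆ ball 0 1) {a : ℝ} (ha : 0 ≤ a) :
    0 ≤ ∫ s in Ioi a, s ^ n * hardyDensity v s := by
  have hflux : ContDiff ℝ 1 (hardyFlux n v) := contDiff_hardyFlux n hv hs
  have hfluxc : HasCompactSupport (hardyFlux n v) :=
    (hasCompactSupport_of_tsupport_subset_ball hs).mono (support_hardyFlux_subset n v)
  have hdens : Integrable fun s => s ^ n * hardyDensity v s :=
    integrable_pow_mul_of_tsupport_subset_ball n (continuous_hardyDensity hv hs)
      (tsupport_hardyDensity_subset.trans hs)
  have hboundary : 0 ≤ -hardyFlux n v a := by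
    rw [hardyFlux, neg_neg]
    by_cases hav : a ∈ tsupport v
    · have := one_sub_sq_pos_of_mem_ball (hs hav)
      positivity
    · simp [image_eq_zero_of_notMem_tsupport hav]
  calc 0 ≤ -hardyFlux n v a := hboundary
    _ = ∫ s in Ioi a, deriv (hardyFlux n v) s := (hfluxc.integral_Ioi_deriv_eq hflux a).symm
    _ ≤ ∫ s in Ioi a, s ^ n * hardyDensity v s :=
      setIntegral_mono_on
        ((hflux.continuous_deriv le_rfl).integrable_of_hasCompactSupport hfluxc.deriv).integrableOn
        hdens.integrableOn measurableSet_Ioi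
        fun s hsa => deriv_hardyFlux_le n (hv.differentiable one_ne_zero s) hs
          (ha.trans (mem_Ioi.1 hsa).le)

end Ray

section Polar

variable {F : Type*} [NormedAddCommGroup F] [NormedSpace ℝ F]

lemma integral_volumeIoiPow (n : ℕ) (g : ℝ → F) :
    ∫ s : Ioi (0 : ℝ), g s ∂Measure.volumeIoiPow n = ∫ s in Ioi (0 : ℝ), s ^ n • g s := by
  simp only [Measure.volumeIoiPow, ENNReal.ofReal]
  rw [integral_withDensity_eq_integral_smul (measurable_subtype_coe.pow_const n).real_toNNReal,
    integral_subtype_comap measurableSet_Ioi fun s => Real.toNNReal (s ^ n) • g s]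
  refine setIntegral_congr_fun measurableSet_Ioi fun s hs => ?_
  simp only [NNReal.smul_def, Real.coe_toNNReal _ (pow_nonneg (mem_Ioi.1 hs).le n)]

lemma setIntegral_Ioi_indicator_Ici (g : ℝ → F) (a r : ℝ) :
    ∫ s in Ioi a, (Ici r).indicator g s = ∫ s in Ioi (max a r), g s := by
  rw [setIntegral_indicator measurableSet_Ici, ← Ioi_inter_Ioi]
  exact setIntegral_congr_set ((ae_eq_refl _).inter Ioi_ae_eq_Ici.symm)

variable {E : Type*} [NormedAddCommGroup E] [NormedSpace ℝ E] [FiniteDimensional ℝ E]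
  [Nontrivial E] [MeasurableSpace E] [BorelSpace E] (μ : Measure E) [μ.IsAddHaarMeasure]

lemma integral_eq_integral_toSphere_integral_Ioi {f : E → F} (hf : Integrable f μ) :
    ∫ x, f x ∂μ = ∫ y : sphere (0 : E) 1,
      (∫ s in Ioi (0 : ℝ), s ^ (finrank ℝ E - 1) • f (s • (y : E))) ∂μ.toSphere := by
  have hpolar := μ.measurePreserving_homeomorphUnitSphereProd
  have hemb := (homeomorphUnitSphereProd E).measurableEmbedding
  set g : sphere (0 : E) 1 × Ioi (0 : ℝ) → F := fun p => f ((p.2 : ℝ) • (p.1 : E))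
  have hg : ∀ x : ({0}ᶜ : Set E), g (homeomorphUnitSphereProd E x) = f x := fun x => by
    have : ‖(x : E)‖ ≠ 0 := norm_ne_zero_iff.2 x.2
    simp [g, smul_smul, this]
  have hgint : Integrable g (μ.toSphere.prod (.volumeIoiPow (finrank ℝ E - 1))) := by
    rw [← hpolar.integrable_comp_emb hemb]
    simp only [Function.comp_def, hg]
    exact (integrableOn_iff_comap_subtypeVal (measurableSet_singleton 0).compl).1 hf.integrableOn
  calc ∫ x, f x ∂μ = ∫ x : ({0}ᶜ : Set E), f x ∂μ.comap (↑) := by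
        rw [integral_subtype_comap (measurableSet_singleton 0).compl f, restrict_compl_singleton]
    _ = ∫ p, g p ∂μ.toSphere.prod (.volumeIoiPow (finrank ℝ E - 1)) := by
        simp only [← hpolar.integral_comp hemb, hg]
    _ = ∫ y, ∫ s, g (y, s) ∂Measure.volumeIoiPow (finrank ℝ E - 1) ∂μ.toSphere :=
        integral_prod g hgint
    _ = ∫ y : sphere (0 : E) 1,
          (∫ s in Ioi (0 : ℝ), s ^ (finrank ℝ E - 1) • f (s • (y : E))) ∂μ.toSphere := by
        congr! 2 with y
        exact integral_volumeIoiPow _ fun s => f (s • (y : E))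

end Polar

section Exterior

variable {E : Type*} [NormedAddCommGroup E] [NormedSpace ℝ E] {u : E → ℝ}

lemma tsupport_comp_linearIsometry_subset_ball {F : Type*} [NormedAddCommGroup F]
    [NormedSpace ℝ F] (L : F →ₗᵢ[ℝ] E) {R : ℝ} (hu : tsupport u ⊆ ball 0 R) :
    tsupport (u ∘ L) ⊆ ball 0 R := fun x hx => by
  simpa using hu (tsupport_comp_subset_preimage u L.continuous hx)

lemma integral_Ioi_pow_mul_hardyDensity_smul_nonneg (n : ℕ) (hu : ContDiff ℝ 1 u)
    (hs : tsupport u ⊆ ball 0 1) {y : E} (hy : ‖y‖ = 1) {a : ℝ} (ha : 0 ≤ a) :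
    0 ≤ ∫ s in Ioi a, s ^ n * hardyDensity u (s • y) := by
  set L : ℝ →ₗᵢ[ℝ] E := LinearIsometry.toSpanSingleton ℝ E hy
  have hv : ContDiff ℝ 1 (u ∘ L) := hu.comp L.contDiff
  have hvs : tsupport (u ∘ L) ⊆ ball 0 1 := tsupport_comp_linearIsometry_subset_ball L hs
  refine (integral_Ioi_pow_mul_hardyDensity_nonneg n hv hvs ha).trans
    (setIntegral_mono_on ?_ ?_ measurableSet_Ioi fun s hsa => ?_)
  · exact (integrable_pow_mul_of_tsupport_subset_ball n (continuous_hardyDensity hv hvs)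
      (tsupport_hardyDensity_subset.trans hvs)).integrableOn
  · exact (integrable_pow_mul_of_tsupport_subset_ball n
      ((continuous_hardyDensity hu hs).comp L.continuous)
      (tsupport_comp_linearIsometry_subset_ball L
        (tsupport_hardyDensity_subset.trans hs))).integrableOn
  · exact mul_le_mul_of_nonneg_left
      (hardyDensity_comp_linearIsometry_le L (hu.differentiable one_ne_zero _))
      (pow_nonneg (ha.trans (mem_Ioi.1 hsa).le) n)

variable [FiniteDimensional ℝ E] [MeasurableSpace E] [BorelSpace E] [Nontrivial E]
  (μ : Measure E) [μ.IsAddHaarMeasure]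

lemma setIntegral_compl_ball_hardyDensity_nonneg (hu : ContDiff ℝ 1 u)
    (hs : tsupport u ⊆ ball 0 1) (r : ℝ) :
    0 ≤ ∫ x in (ball 0 r)ᶜ, hardyDensity u x ∂μ := by
  rw [← integral_indicator measurableSet_ball.compl, integral_eq_integral_toSphere_integral_Ioi μ
    ((integrable_hardyDensity μ hu hs).indicator measurableSet_ball.compl)]
  refine integral_nonneg fun y => ?_
  have hy : ‖(y : E)‖ = 1 := norm_eq_of_mem_sphere y
  have hray : EqOn
      (fun s : ℝ => s ^ (finrank ℝ E - 1) • (ball 0 r)ᶜ.indicator (hardyDensity u) (s • (y : E)))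
      ((Ici r).indicator fun s => s ^ (finrank ℝ E - 1) * hardyDensity u (s • (y : E)))
      (Ioi 0) := fun s hs => by
    have hnorm : ‖s • (y : E)‖ = s := by
      rw [norm_smul, hy, mul_one, norm_of_nonneg (mem_Ioi.1 hs).le]
    simp [indicator, hnorm]
  beta_reduce
  rw [setIntegral_congr_fun measurableSet_Ioi hray, setIntegral_Ioi_indicator_Ici]
  exact integral_Ioi_pow_mul_hardyDensity_smul_nonneg _ hu hs hy (le_max_left 0 r)

theorem exterior_hardy_nonneg_general (hu : ContDiff ℝ 1 u) (hs : tsupport u ⊆ ball 0 1)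
    {r : ℝ} (hr : r ≤ 1) :
    0 ≤ ∫ x in ball 0 1 \ ball 0 r, hardyDensity u x ∂μ ∧
      ∫ x in ball 0 r, hardyDensity u x ∂μ ≤ ∫ x in ball 0 1, hardyDensity u x ∂μ := by
  have hext : 0 ≤ ∫ x in ball 0 1 \ ball 0 r, hardyDensity u x ∂μ := by
    rw [setIntegral_ball_diff_ball_hardyDensity μ hs]
    exact setIntegral_compl_ball_hardyDensity_nonneg μ hu hs r
  have hsplit := setIntegral_sdiff (measurableSet_ball (x := (0 : E)) (ε := r))
    (integrable_hardyDensity μ hu hs).integrableOn (ball_subset_ball hr)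
  exact ⟨hext, sub_nonneg.1 (hsplit ▸ hext)⟩

end Exterior

lemma HOn_eq_setIntegral_hardyDensity {u : E2 → ℝ} (hu : ContDiff ℝ 1 u)
    (hs : tsupport u ⊆ ball 0 1) (Ω : Set E2) : HOn Ω u = ∫ x in Ω, hardyDensity u x := by
  rw [setIntegral_hardyDensity volume hu hs]
  simp only [HOn, gradient, LinearIsometryEquiv.norm_map]

/-- For `u ∈ Σ` and `r ∈ (0, 1)` one has `H_{B \ B_r}(u) ≥ 0`; equivalently
`H_{B_r}(u) ≤ H(u)`. -/
theorem exterior_hardy_nonneg :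
    ∀ u : E2 → ℝ, IsSigma u → ∀ r : ℝ, 0 < r → r < 1 →
      0 ≤ HOn (B2 \ Metric.ball 0 r) u ∧ HOn (Metric.ball 0 r) u ≤ H u := by
  rintro u ⟨⟨hu, -, hs⟩, -⟩ r - hr
  have hu₁ : ContDiff ℝ 1 u := hu.of_le (by exact_mod_cast le_top)
  simp only [H, HOn_eq_setIntegral_hardyDensity hu₁ hs]
  exact exterior_hardy_nonneg_general volume hu₁ hs hr.le
end
end
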